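/- For each permutation w of {1,…,a}, fix a reduced word for w, i.e., an expression w = s_{i_1}⋯s_{i_ℓ} as a product of adjacent transpositions s_i = (i, i+1) of minimal possible length ℓ = ℓ(w), and define ∂_w = ∂_{i_1} ∘ ⋯ ∘ ∂_{i_ℓ} (with ∂_e = id for the identity permutation). Then the operators ∂_w are linearly independent over the polynomial ring: if polynomials f_w ∈ ℤ[x_1,…,x_a] (for w ranging over all permutations of {1,…,a}) satisfy ∑_w f_w·∂_w = 0 as an operator on ℤ[x_1,…,x_a] (where f_w acts by multiplication), then f_w = 0 for every w. -/

import Mathlib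

/-! Linear independence of the operators `∂_w` over the polynomial ring.
Variables are indexed by `Fin a` (0-indexed); the adjacent transposition `s_i`
of the paper corresponds to `swapPerm a i` for `i : ℕ` with `i + 1 < a`. -/

open MvPolynomial

/-- The adjacent transposition `(i, i+1)` of `Fin a` (and the identity for an
out-of-range index). -/
noncomputable def swapPerm (a : ℕ) (i : ℕ) : Equiv.Perm (Fin a) :=
  if h : i + 1 < a then Equiv.swap ⟨i, by omega⟩ ⟨i + 1, h⟩ else 1

open Classical in
theorem stmt8_aux (a : ℕ) (K : Type) [Field K] [Algebra (MvPolynomial (Fin a) ℤ) K]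
    [IsFractionRing (MvPolynomial (Fin a) ℤ) K]
    (D : ℕ → Module.End ℤ (MvPolynomial (Fin a) ℤ))
    (hD : ∀ (i : ℕ) (hi : i + 1 < a) (f : MvPolynomial (Fin a) ℤ),
      (X (⟨i, by omega⟩ : Fin a) - X (⟨i + 1, hi⟩ : Fin a)) * D i f =
        f - rename (Equiv.swap (⟨i, by omega⟩ : Fin a) (⟨i + 1, hi⟩ : Fin a)) f)
    (L : Equiv.Perm (Fin a) → List ℕ)
    (hLval : ∀ w, ∀ i ∈ L w, i + 1 < a)
    (hLprod : ∀ w, ((L w).map (swapPerm a)).prod = w)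
    (hLmin : ∀ w, ∀ l : List ℕ, (∀ i ∈ l, i + 1 < a) →
      (l.map (swapPerm a)).prod = w → (L w).length ≤ l.length)
    (l : List ℕ) (hl : ∀ i ∈ l, i + 1 < a) :
    ∃ c : Equiv.Perm (Fin a) → K,
      (∀ p, algebraMap _ (K) ((l.map D).prod p) =
        ∑ v, c v * algebraMap _ _ (rename v p)) ∧
      (∀ v, c v ≠ 0 → (L v).length ≤ l.length) ∧
      (∀ v, (L v).length = l.length → (c v ≠ 0 ↔ v = (l.map (swapPerm a)).prod)) := by
  induction l with
  | nil =>
    refine ⟨fun v => if v = 1 then 1 else 0, ?_, ?_, ?_⟩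
    · intro p
      simp
    · intro v hv
      have : v = 1 := by simpa using hv
      subst this
      exact hLmin 1 [] (by simp) (by simp)
    · intro v _
      simp
  | cons i l ih =>
    obtain ⟨c, h1, h2, h3⟩ := ih (fun j hj => hl j (List.mem_cons_of_mem _ hj))
    have hi : i + 1 < a := hl i (by simp)
    set s := swapPerm a i with hs
    have hs' : s = Equiv.swap (⟨i, by omega⟩ : Fin a) (⟨i + 1, hi⟩ : Fin a) := by
      rw [hs, swapPerm, dif_pos hi]
    have hss : s * s = 1 := by rw [hs']; exact Equiv.swap_mul_self _ _
    have hssv : ∀ v, s * (s * v) = v := fun v => by rw [← mul_assoc, hss, one_mul]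
    have hlen : ∀ v, (L v).length ≤ (L (s * v)).length + 1 := by
      intro v
      have := hLmin v (i :: L (s * v)) (by
        intro j hj
        rcases List.mem_cons.1 hj with rfl | hj
        · exact hi
        · exact hLval _ j hj) (by
          rw [List.map_cons, List.prod_cons, hLprod, ← hs, hssv])
      simpa using this
    let σ : K ≃+* K := IsFractionRing.ringEquivOfRingEquiv (renameEquiv ℤ s).toRingEquiv
    have hσ : ∀ p : MvPolynomial (Fin a) ℤ,
        σ (algebraMap _ K p) = algebraMap _ K (rename s p) := by
      intro p
      exact IsFractionRing.ringEquivOfRingEquiv_algebraMap _ p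
    set d : K := algebraMap (MvPolynomial (Fin a) ℤ) K (X (⟨i, by omega⟩ : Fin a) - X (⟨i + 1, hi⟩ : Fin a)) with hd
    have hd0 : d ≠ 0 := by
      rw [hd, Ne, IsFractionRing.to_map_eq_zero_iff, sub_eq_zero, X_inj]
      simp
    refine ⟨fun v => (c v - σ (c (s * v))) / d, ?_, ?_, ?_⟩
    · intro p
      have e := congrArg (algebraMap (MvPolynomial (Fin a) ℤ) K) (hD i hi ((l.map D).prod p))
      rw [map_mul, ← hd, map_sub, ← hs', ← hσ, h1] at e
      rw [List.map_cons, List.prod_cons, Module.End.mul_apply]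
      apply mul_left_cancel₀ hd0
      rw [e, Finset.mul_sum, map_sum]
      have : ∑ v, σ (c v * algebraMap _ K (rename v p)) =
          ∑ v, σ (c (s * v)) * algebraMap _ K (rename v p) := by
        rw [← Equiv.sum_comp (Equiv.mulLeft s)]
        refine Finset.sum_congr rfl fun v _ => ?_
        rw [Equiv.coe_mulLeft, map_mul, hσ, rename_rename, ← Equiv.Perm.coe_mul, hssv]
      rw [this, ← Finset.sum_sub_distrib]
      refine Finset.sum_congr rfl fun v _ => ?_
      field_simp
    · intro v hv
      by_contra hcon
      rw [List.length_cons] at hcon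
      have a1 : c v = 0 := by
        by_contra h
        have := h2 v h
        omega
      have a2 : c (s * v) = 0 := by
        by_contra h
        have := h2 _ h
        have := hlen v
        omega
      simp [a1, a2] at hv
    · intro v hv
      rw [List.length_cons] at hv
      have a1 : c v = 0 := by
        by_contra h
        have := h2 v h
        omega
      have key : (c v - σ (c (s * v))) / d ≠ 0 ↔ c (s * v) ≠ 0 := by
        simp [a1, hd0]
      have hsv := hlen v
      rw [key, List.map_cons, List.prod_cons, ← hs]
      constructor
      · intro h
        have := h2 _ h
        have e := (h3 (s * v) (by omega)).1 h
        rw [← e, hssv]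
      · intro h
        have e : s * v = (l.map (swapPerm a)).prod := by rw [h, hssv]
        have := hLmin (s * v) l (fun j hj => hl j (List.mem_cons_of_mem _ hj)) e.symm
        exact (h3 _ (by omega)).2 e

theorem stmt8 (a : ℕ) (ha : 1 ≤ a)
    -- a family of operators satisfying the divided-difference property
    (D : ℕ → Module.End ℤ (MvPolynomial (Fin a) ℤ))
    (hD : ∀ (i : ℕ) (hi : i + 1 < a) (f : MvPolynomial (Fin a) ℤ),
      (X (⟨i, by omega⟩ : Fin a) - X (⟨i + 1, hi⟩ : Fin a)) * D i f =
        f - rename (Equiv.swap (⟨i, by omega⟩ : Fin a) (⟨i + 1, hi⟩ : Fin a)) f)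
    -- a choice of reduced word for each permutation
    (L : Equiv.Perm (Fin a) → List ℕ)
    (hLval : ∀ w, ∀ i ∈ L w, i + 1 < a)
    (hLprod : ∀ w, ((L w).map (swapPerm a)).prod = w)
    (hLmin : ∀ w, ∀ l : List ℕ, (∀ i ∈ l, i + 1 < a) →
      (l.map (swapPerm a)).prod = w → (L w).length ≤ l.length)
    -- a (polynomial) linear combination of the operators ∂_w that vanishes
    (f : Equiv.Perm (Fin a) → MvPolynomial (Fin a) ℤ)
    (hf : ∑ w : Equiv.Perm (Fin a),
      (LinearMap.mulLeft ℤ (f w) : Module.End ℤ (MvPolynomial (Fin a) ℤ)) *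
        ((L w).map D).prod = 0) :
    ∀ w, f w = 0 := by
  classical
  choose c h1 h2 h3 using fun w => stmt8_aux a (FractionRing (MvPolynomial (Fin a) ℤ)) D hD L hLval hLprod hLmin (L w) (hLval w)
  have hinj : Function.Injective (algebraMap (MvPolynomial (Fin a) ℤ) (FractionRing (MvPolynomial (Fin a) ℤ))) :=
    IsFractionRing.injective _ _
  let φ : Equiv.Perm (Fin a) → (MvPolynomial (Fin a) ℤ →* (FractionRing (MvPolynomial (Fin a) ℤ))) := fun v =>
    ((algebraMap (MvPolynomial (Fin a) ℤ) (FractionRing (MvPolynomial (Fin a) ℤ))).comp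
      (rename (R := ℤ) v).toRingHom : MvPolynomial (Fin a) ℤ →+* (FractionRing (MvPolynomial (Fin a) ℤ)))
  have hφ : ∀ v p, φ v p = algebraMap _ (FractionRing (MvPolynomial (Fin a) ℤ)) (rename v p) := fun v p => rfl
  have φinj : Function.Injective φ := by
    intro v w h
    ext x
    have h' := DFunLike.congr_fun h (X x)
    rw [hφ, hφ, rename_X, rename_X] at h'
    rw [X_injective (hinj h')]
  have li := (linearIndependent_monoidHom (MvPolynomial (Fin a) ℤ) (FractionRing (MvPolynomial (Fin a) ℤ))).comp φ φinj
  have hz : ∀ v, ∑ w, algebraMap _ (FractionRing (MvPolynomial (Fin a) ℤ)) (f w) * c w v = 0 := by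
    rw [Fintype.linearIndependent_iff] at li
    refine li (fun v => ∑ w, algebraMap _ (FractionRing (MvPolynomial (Fin a) ℤ)) (f w) * c w v) ?_
    funext p
    have e := congrArg (algebraMap _ (FractionRing (MvPolynomial (Fin a) ℤ))) (LinearMap.congr_fun hf p)
    simp only [LinearMap.sum_apply, Module.End.mul_apply, LinearMap.mulLeft_apply, map_sum,
      map_mul, LinearMap.zero_apply, map_zero] at e
    simp only [Finset.sum_apply, Pi.smul_apply, Function.comp_apply, smul_eq_mul, Pi.zero_apply]
    refine Eq.trans ?_ e
    simp_rw [Finset.sum_mul]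
    rw [Finset.sum_comm]
    refine Finset.sum_congr rfl fun w _ => ?_
    rw [h1, Finset.mul_sum]
    refine Finset.sum_congr rfl fun v _ => ?_
    rw [hφ, mul_assoc]
  obtain ⟨N, hN⟩ : ∃ N, ∀ w, (L w).length ≤ N :=
    ⟨∑ w, (L w).length, fun w =>
      Finset.single_le_sum (f := fun w => (L w).length) (fun _ _ => Nat.zero_le _)
        (Finset.mem_univ w)⟩
  have main : ∀ n, ∀ v, N - (L v).length = n → f v = 0 := by
    intro n
    induction n using Nat.strong_induction_on with
    | _ n ih =>
      intro v hv
      have e := hz v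
      rw [Finset.sum_eq_single v] at e
      · have hc : c v v ≠ 0 := (h3 v v rfl).2 (hLprod v).symm
        rcases mul_eq_zero.1 e with h | h
        · exact hinj (by rw [h, map_zero])
        · exact absurd h hc
      · intro w _ hwv
        by_cases hc : c w v = 0
        · rw [hc, mul_zero]
        · have g := h2 w v hc
          have g' : (L v).length ≠ (L w).length := by
            intro h
            have := (h3 w v h).1 hc
            rw [hLprod] at this
            exact hwv this.symm
          have := hN w
          have := hN v
          rw [ih (N - (L w).length) (by omega) w rfl, map_zero, zero_mul]
      · intro h
        exact absurd (Finset.mem_univ v) h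
  exact fun v => main _ v rfl
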